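/- For every leader's decision x = (x₁, x₂) in the box [x̲₁, x̄₁] × [x̲₂, x̄₂], every maximizer y* ∈ S(x) of the follower's objective satisfies y*_{n+1} = x₁ and y*_{n+2} = x₂. -/

import Mathlib

/-!
On the feasible set the coefficient `yₙ` is strictly positive (`Omega_last_pos`), so the objective
`y₁ - yₙ (x₁ + x₂ - y_{n+1} - y_{n+2})` is strictly increasing in `y_{n+1} + y_{n+2}`. These two
coordinates are constrained only by their bounds, so raising them to `x₁` and `x₂` keeps a point
feasible. A maximizer therefore already has them at their upper bounds.
-/

/-- The lower-level feasible set `Ω(x)` of the bilevel example: points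
`y ∈ ℝ^{n+2}` (0-indexed: Lean index `j` corresponds to math index `j+1`) with
`y₁ + yₙ = 1/2`, `yᵢ² ≤ yᵢ₊₁` for `i = 1,…,n−1`, `yᵢ ≥ 0` for `i = 1,…,n`,
`0 ≤ y_{n+1} ≤ x₁`, and `−x₂ ≤ y_{n+2} ≤ x₂`. -/
def Omega (n : ℕ) (x1 x2 : ℝ) : Set (Fin (n + 2) → ℝ) :=
  {y | y ⟨0, by omega⟩ + y ⟨n - 1, by omega⟩ = 1 / 2 ∧
    (∀ i : ℕ, ∀ _h1 : 1 ≤ i, ∀ _h2 : i ≤ n - 1,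
      (y ⟨i - 1, by omega⟩) ^ 2 ≤ y ⟨i, by omega⟩) ∧
    (∀ i : ℕ, ∀ _h1 : 1 ≤ i, ∀ _h2 : i ≤ n, 0 ≤ y ⟨i - 1, by omega⟩) ∧
    0 ≤ y ⟨n, by omega⟩ ∧ y ⟨n, by omega⟩ ≤ x1 ∧
    -x2 ≤ y ⟨n + 1, by omega⟩ ∧ y ⟨n + 1, by omega⟩ ≤ x2}

/-- The follower's objective `f(x, y) = y₁ − yₙ (x₁ + x₂ − y_{n+1} − y_{n+2})`. -/
noncomputable def follower (n : ℕ) (x1 x2 : ℝ) (y : Fin (n + 2) → ℝ) : ℝ :=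
  y ⟨0, by omega⟩ -
    y ⟨n - 1, by omega⟩ * (x1 + x2 - y ⟨n, by omega⟩ - y ⟨n + 1, by omega⟩)

/-- The set `S(x)` of maximizers of the follower's objective over `Ω(x)`. -/
def SOpt (n : ℕ) (x1 x2 : ℝ) : Set (Fin (n + 2) → ℝ) :=
  {y | y ∈ Omega n x1 x2 ∧
    ∀ y' ∈ Omega n x1 x2, follower n x1 x2 y' ≤ follower n x1 x2 y}

/-- A feasible point has `yₙ > 0`: were `yₙ ≤ 0`, the coupling constraint would give `y₁ > 0`, and
the chain `yᵢ² ≤ yᵢ₊₁` carries strict positivity from `y₁` up to `yₙ`. -/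
theorem Omega_last_pos {n : ℕ} (hn : 2 ≤ n) {x1 x2 : ℝ} {y : Fin (n + 2) → ℝ}
    (hy : y ∈ Omega n x1 x2) : 0 < y ⟨n - 1, by omega⟩ := by
  obtain ⟨hsum, hchain, -⟩ := hy
  by_contra! hle
  have hpos : ∀ i : ℕ, ∀ hi : i ≤ n - 1, 0 < y ⟨i, by omega⟩ := by
    intro i
    induction i with
    | zero => intro _; linarith
    | succ k ih =>
      intro hi
      exact (pow_pos (ih (by omega)) 2).trans_le (hchain (k + 1) (by omega) hi)
  exact absurd (hpos (n - 1) le_rfl) hle.not_gt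

/-- For every leader's decision `x` in the box, every maximizer `y* ∈ S(x)`
of the follower's objective satisfies `y*_{n+1} = x₁` and `y*_{n+2} = x₂`. -/
theorem stmt5 (n : ℕ) (hn : 2 ≤ n)
    (xl1 xl2 xu1 xu2 : ℝ) (hl1 : 1 ≤ xl1) (hl2 : 1 ≤ xl2)
    (hu1 : xl1 < xu1) (hu2 : xl2 < xu2)
    (x1 x2 : ℝ) (hx1 : x1 ∈ Set.Icc xl1 xu1) (hx2 : x2 ∈ Set.Icc xl2 xu2)
    (ys : Fin (n + 2) → ℝ) (hys : ys ∈ SOpt n x1 x2) :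
    ys ⟨n, by omega⟩ = x1 ∧ ys ⟨n + 1, by omega⟩ = x2 := by
  have hpos := Omega_last_pos hn hys.1
  obtain ⟨⟨hsum, hchain, hnonneg, h0, h1, h2, h3⟩, hmax⟩ := hys
  have hx1' : 0 ≤ x1 := h0.trans h1
  have hx2' : -x2 ≤ x2 := h2.trans h3
  -- The competitor: `ys` with its last two coordinates raised to their upper bounds.
  let z : Fin (n + 2) → ℝ := fun j =>
    if (j : ℕ) < n then ys j else if (j : ℕ) = n then x1 else x2
  have hz : ∀ i : ℕ, ∀ hi : i < n, z ⟨i, by omega⟩ = ys ⟨i, by omega⟩ := by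
    intro i hi
    simp [z, hi]
  have hzn : z ⟨n, by omega⟩ = x1 := by simp [z]
  have hzn1 : z ⟨n + 1, by omega⟩ = x2 := by simp [z]
  have hzmem : z ∈ Omega n x1 x2 := by
    refine ⟨?_, ?_, ?_, ?_, ?_, ?_, ?_⟩
    · rw [hz 0 (by omega), hz (n - 1) (by omega)]
      exact hsum
    · intro i hi1 hi2
      rw [hz (i - 1) (by omega), hz i (by omega)]
      exact hchain i hi1 hi2
    · intro i hi1 hi2
      rw [hz (i - 1) (by omega)]
      exact hnonneg i hi1 hi2
    · rw [hzn]; exact hx1'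
    · rw [hzn]
    · rw [hzn1]; exact hx2'
    · rw [hzn1]
  have hle := hmax z hzmem
  unfold follower at hle
  rw [hz 0 (by omega), hz (n - 1) (by omega), hzn, hzn1] at hle
  have hgap : x1 + x2 - ys ⟨n, by omega⟩ - ys ⟨n + 1, by omega⟩ ≤ 0 := by
    refine nonpos_of_mul_nonpos_right ?_ hpos
    linarith
  constructor <;> linarith
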